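/- There exists a slowly varying, monotone decreasing, differentiable function γ on (0,∞) such that E[|X|^r; |X| > t] = o(γ(t) t^{r−2}) as t → ∞, and ∫_1^∞ γ(x)/x dx < ∞. -/

import Mathlib

open MeasureTheory ProbabilityTheory Filter
open scoped RealInnerProductSpace

/-!
Take `γ t = h (log (1 + t))`, where `h` superposes the Lomax tails `s ↦ (y / (y + s)) ^ 2` over a
finite measure `ν` of scales `y > 0`. Each of these tails is decreasing while its product with
`s ^ 2` is increasing, and both properties pass to `h`. Hence `h` takes asymptotically equivalent
values at asymptotically equivalent arguments, and `log (1 + l * t) ~ log (1 + t)` makes `γ` slowly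
varying. As each tail integrates to `y`, substituting `s = log (1 + x)` bounds `∫ γ x / x` over
`(1, ∞)` by a multiple of the mean of `ν`.

Since the tail of scale `y` is at least `1 / 4` for `s < y`, `h` dominates the tail of `ν`. For
`r = 2` it therefore suffices that `ν` has finite mean and a heavier tail than the law of
`log (1 + |X|)` under `|X| ^ 2 μ`. That law has finite mean by the moment hypothesis, and still does
after multiplication by a suitable weight tending to infinity. For `r > 2` every `ν` of finite mean
works: `h s ≥ c / s ^ 2` for `s ≥ 1` makes `γ t * t ^ (r - 2)` tend to infinity, and the tail moment
is bounded.
-/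

section Development

open Real Set Asymptotics
open scoped Topology ENNReal

section SlowVariation

/-- Slow variation at infinity in the sense of Karamata. -/
def SlowlyVarying (γ : ℝ → ℝ) : Prop :=
  ∀ l : ℝ, 0 < l → Tendsto (fun t => γ (l * t) / γ t) atTop (𝓝 1)

lemma isEquivalent_log_one_add_mul {l : ℝ} (hl : 0 < l) :
    (fun t => log (1 + l * t)) ~[atTop] log := by
  have hlin : Tendsto (fun t : ℝ => l * t) atTop atTop := tendsto_id.const_mul_atTop hl
  have hdrop_one : (fun t => log (1 + l * t)) ~[atTop] fun t => log (l * t) :=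
    (IsEquivalent.refl.const_add_of_norm_tendsto_atTop
      (tendsto_norm_atTop_atTop.comp hlin)).log hlin
  have hdrop_l : (fun t => log l + log t) ~[atTop] log :=
    IsEquivalent.refl.const_add_of_norm_tendsto_atTop
      (tendsto_norm_atTop_atTop.comp tendsto_log_atTop)
  refine hdrop_one.trans (hdrop_l.congr_left ?_)
  filter_upwards [eventually_gt_atTop 0] with t ht
  exact (log_mul hl.ne' ht.ne').symm

lemma isEquivalent_log_one_add : (fun t => log (1 + t)) ~[atTop] log := by
  simpa only [one_mul] using isEquivalent_log_one_add_mul one_pos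

lemma tendsto_log_one_add_atTop : Tendsto (fun t => log (1 + t)) atTop atTop :=
  isEquivalent_log_one_add.symm.tendsto_atTop tendsto_log_atTop

variable {h : ℝ → ℝ} {k : ℕ}

lemma div_mem_uIcc_of_antitoneOn_of_monotoneOn (hpos : ∀ s, 0 < s → 0 < h s)
    (hanti : AntitoneOn h (Ioi 0)) (hmono : MonotoneOn (fun s => s ^ k * h s) (Ioi 0))
    {s s' : ℝ} (hs : 0 < s) (hs' : 0 < s') : h s' / h s ∈ uIcc 1 ((s / s') ^ k) := by
  have hh := hpos s hs
  rw [mem_uIcc, div_pow]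
  rcases le_total s s' with hle | hle
  · refine .inr ⟨?_, (div_le_one hh).2 (hanti hs hs' hle)⟩
    rw [div_le_div_iff₀ (by positivity) hh, mul_comm (h s')]
    exact hmono hs hs' hle
  · refine .inl ⟨(one_le_div hh).2 (hanti hs' hs hle), ?_⟩
    rw [div_le_div_iff₀ hh (by positivity), mul_comm (h s')]
    exact hmono hs' hs hle

lemma isEquivalent_comp_of_antitoneOn_of_monotoneOn (hpos : ∀ s, 0 < s → 0 < h s)
    (hanti : AntitoneOn h (Ioi 0)) (hmono : MonotoneOn (fun s => s ^ k * h s) (Ioi 0))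
    {α : Type*} {F : Filter α} {u v : α → ℝ} (huv : u ~[F] v) (hv : Tendsto v F atTop) :
    (fun x => h (u x)) ~[F] fun x => h (v x) := by
  have hupos : ∀ᶠ x in F, 0 < u x := (huv.symm.tendsto_atTop hv).eventually_gt_atTop 0
  have hvpos : ∀ᶠ x in F, 0 < v x := hv.eventually_gt_atTop 0
  have hratio : Tendsto (fun x => (v x / u x) ^ k) F (𝓝 1) := by
    have := (isEquivalent_iff_tendsto_one (hupos.mono fun _ => ne_of_gt)).1 huv.symm
    simpa only [one_pow, Pi.div_apply] using this.pow k
  have hmem : ∀ᶠ x in F, h (u x) / h (v x) ∈ uIcc 1 ((v x / u x) ^ k) := by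
    filter_upwards [hupos, hvpos] with x hux hvx
    exact div_mem_uIcc_of_antitoneOn_of_monotoneOn hpos hanti hmono hvx hux
  refine (isEquivalent_iff_tendsto_one (hvpos.mono fun x hx => (hpos _ hx).ne')).2 ?_
  refine tendsto_of_tendsto_of_tendsto_of_le_of_le'
    (by simpa only [min_self] using (tendsto_const_nhds (x := (1 : ℝ))).min hratio)
    (by simpa only [max_self] using (tendsto_const_nhds (x := (1 : ℝ))).max hratio)
    (hmem.mono fun _ hx => hx.1) (hmem.mono fun _ hx => hx.2)

lemma slowlyVarying_comp_log_one_add (hpos : ∀ s, 0 < s → 0 < h s)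
    (hanti : AntitoneOn h (Ioi 0)) (hmono : MonotoneOn (fun s => s ^ k * h s) (Ioi 0)) :
    SlowlyVarying fun t => h (log (1 + t)) := by
  intro l hl
  have hlog : (fun t => log (1 + l * t)) ~[atTop] fun t => log (1 + t) :=
    (isEquivalent_log_one_add_mul hl).trans isEquivalent_log_one_add.symm
  refine (isEquivalent_iff_tendsto_one ?_).1 (isEquivalent_comp_of_antitoneOn_of_monotoneOn
    hpos hanti hmono hlog tendsto_log_one_add_atTop)
  filter_upwards [tendsto_log_one_add_atTop.eventually_gt_atTop 0] with t ht
  exact (hpos _ ht).ne'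

lemma one_isLittleO_comp_log_one_add_mul_rpow (hpos : 0 < h 1)
    (hmono : MonotoneOn (fun s => s ^ k * h s) (Ioi 0)) {p : ℝ} (hp : 0 < p) :
    (fun _ => (1 : ℝ)) =o[atTop] fun t => h (log (1 + t)) * t ^ p := by
  have hlower : (fun _ => (1 : ℝ)) =O[atTop] fun s => s ^ k * h s := by
    refine (isBigO_const_const 1 hpos.ne' atTop).trans (IsBigO.of_norm_eventuallyLE ?_)
    filter_upwards [eventually_ge_atTop 1] with s hs
    have hle : h 1 ≤ s ^ k * h s := by
      simpa only [one_pow, one_mul] using hmono (mem_Ioi.2 one_pos) (one_pos.trans_le hs) hs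
    rwa [norm_of_nonneg hpos.le]
  have hpow : (fun t => log (1 + t) ^ k) =o[atTop] fun t : ℝ => t ^ p :=
    (isEquivalent_log_one_add.isBigO.pow k).trans_isLittleO <| by
      simpa only [rpow_natCast] using isLittleO_log_rpow_rpow_atTop (k : ℝ) hp
  have hprod := hpow.mul_isBigO (hlower.comp_tendsto tendsto_log_one_add_atTop)
  refine ((isBigO_refl (fun t => (log (1 + t) ^ k)⁻¹) atTop).mul_isLittleO hprod).congr' ?_ ?_ <;>
    filter_upwards [tendsto_log_one_add_atTop.eventually_gt_atTop 0] with t ht <;>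
    simp only [Function.comp_apply] <;> field_simp

lemma integrableOn_comp_log_one_add_div (hint : IntegrableOn h (Ioi 0)) :
    IntegrableOn (fun x => h (log (1 + x)) / x) (Ioi 1) := by
  have hpos : ∀ x ∈ Ioi (1 : ℝ), 0 < 1 + x := fun x hx => add_pos one_pos (one_pos.trans hx)
  have hderiv : ∀ x ∈ Ioi (1 : ℝ),
      HasDerivWithinAt (fun x => log (1 + x)) (1 / (1 + x)) (Ioi 1) x := fun x hx =>
    (((hasDerivAt_id x).const_add 1).log (hpos x hx).ne').hasDerivWithinAt
  have hinj : InjOn (fun x => log (1 + x)) (Ioi 1) := fun x hx y hy hxy =>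
    add_left_cancel (log_injOn_pos (hpos x hx) (hpos y hy) hxy)
  have himage : (fun x => log (1 + x)) '' Ioi 1 ⊆ Ioi 0 :=
    image_subset_iff.2 fun x hx => log_pos (lt_add_of_pos_right 1 (one_pos.trans hx))
  have hsubst := (integrableOn_image_iff_integrableOn_abs_deriv_smul measurableSet_Ioi hderiv
    hinj h).1 (hint.mono_set himage)
  have hfactor : ∀ᵐ x ∂volume.restrict (Ioi (1 : ℝ)), ‖(1 + x) / x‖ ≤ 2 := by
    filter_upwards [ae_restrict_mem measurableSet_Ioi] with x (hx : 1 < x)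
    rw [norm_of_nonneg (by positivity), div_le_iff₀ (by positivity)]
    linarith
  have hmeas : Measurable fun x : ℝ => (1 + x) / x := by fun_prop
  refine (Integrable.bdd_mul hsubst hmeas.aestronglyMeasurable hfactor).congr ?_
  filter_upwards [ae_restrict_mem measurableSet_Ioi] with x (hx : 1 < x)
  rw [smul_eq_mul, abs_of_pos (by positivity)]
  field_simp

end SlowVariation

section LomaxMixture

/-- The tail `P(L > s)` of a Lomax variable `L` with shape `2` and scale `y`. For every `y` it is
decreasing in `s`, while `s ^ 2 * lomaxTail y s` is increasing, and its integral over `(0, ∞)`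
is `y`. -/
noncomputable def lomaxTail (y s : ℝ) : ℝ := (y / (y + s)) ^ 2

/-- The superposition of the Lomax tails `lomaxTail y` over scales `y` distributed as `ν`; the
slowly varying functions `γ` are of the form `fun t => lomaxMixture ν (log (1 + t))`. -/
noncomputable def lomaxMixture (ν : Measure ℝ) (s : ℝ) : ℝ := ∫ y, lomaxTail y s ∂ν

/-- A distribution of Lomax scales with finite mean: a nonzero finite measure, carried by the
positive reals, whose mean, the integral over `(0, ∞)` of its Lomax mixture, is finite. -/
structure IsScaleMeasure (ν : Measure ℝ) : Prop where
  isFiniteMeasure : IsFiniteMeasure ν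
  ae_pos : ∀ᵐ y ∂ν, 0 < y
  ne_zero : ν ≠ 0
  integrable_id : Integrable (fun y => y) ν

lemma lomaxTail_nonneg (y s : ℝ) : 0 ≤ lomaxTail y s := sq_nonneg _

lemma lomaxTail_le_one {y s : ℝ} (hy : 0 < y) (hs : 0 ≤ s) : lomaxTail y s ≤ 1 :=
  pow_le_one₀ (by positivity) ((div_le_one (by positivity)).2 (le_add_of_nonneg_right hs))

lemma lomaxTail_antitoneOn {y : ℝ} (hy : 0 < y) : AntitoneOn (lomaxTail y) (Ioi 0) := by
  intro s (hs : 0 < s) s' (_ : 0 < s') hle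
  unfold lomaxTail
  gcongr

lemma sq_mul_lomaxTail_monotoneOn {y : ℝ} (hy : 0 < y) :
    MonotoneOn (fun s => s ^ 2 * lomaxTail y s) (Ioi 0) := by
  intro s (hs : 0 < s) s' (hs' : 0 < s') hle
  simp only [lomaxTail, ← mul_pow, ← mul_div_assoc]
  gcongr ?_ ^ 2
  rw [div_le_div_iff₀ (by positivity) (by positivity)]
  nlinarith [mul_le_mul_of_nonneg_left hle (sq_nonneg y)]

lemma hasDerivAt_lomaxTail {y s : ℝ} (hys : y + s ≠ 0) :
    HasDerivAt (lomaxTail y) (-2 * lomaxTail y s / (y + s)) s := by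
  convert! (((hasDerivAt_id s).const_add y).fun_inv hys).const_mul y |>.pow 2 using 1
  simp only [lomaxTail, id]
  push_cast
  field_simp

lemma measurable_lomaxTail : Measurable (Function.uncurry lomaxTail) := by
  unfold lomaxTail Function.uncurry
  fun_prop

section Integral

variable {y : ℝ}

lemma hasDerivAt_neg_sq_div_add {s : ℝ} (hys : y + s ≠ 0) :
    HasDerivAt (fun s => -(y ^ 2 / (y + s))) (lomaxTail y s) s := by
  convert! (((hasDerivAt_id s).const_add y).fun_inv hys).const_mul (y ^ 2) |>.neg using 1
  simp only [lomaxTail, id]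
  field_simp

lemma tendsto_neg_sq_div_add : Tendsto (fun s => -(y ^ 2 / (y + s))) atTop (𝓝 0) := by
  simpa only [neg_zero, id] using
    ((tendsto_atTop_add_const_left atTop y tendsto_id).const_div_atTop (y ^ 2)).neg

lemma integrableOn_lomaxTail (hy : 0 < y) : IntegrableOn (lomaxTail y) (Ioi 0) :=
  integrableOn_Ioi_deriv_of_nonneg
    (hasDerivAt_neg_sq_div_add (by simpa using hy.ne')).continuousAt.continuousWithinAt
    (fun _ hs => hasDerivAt_neg_sq_div_add (add_pos hy hs).ne')
    (fun s _ => lomaxTail_nonneg y s) tendsto_neg_sq_div_add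

lemma integral_lomaxTail (hy : 0 < y) : ∫ s in Ioi 0, lomaxTail y s = y := by
  have := integral_Ioi_of_hasDerivAt_of_nonneg
    (hasDerivAt_neg_sq_div_add (by simpa using hy.ne')).continuousAt.continuousWithinAt
    (fun _ hs => hasDerivAt_neg_sq_div_add (add_pos hy hs).ne')
    (fun s _ => lomaxTail_nonneg y s) tendsto_neg_sq_div_add
  rw [this]
  field_simp
  ring

end Integral

variable {ν : Measure ℝ} [IsFiniteMeasure ν] (hν : ∀ᵐ y ∂ν, 0 < y)
include hν

lemma integrable_lomaxTail {s : ℝ} (hs : 0 ≤ s) : Integrable (fun y => lomaxTail y s) ν := by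
  refine (integrable_const (1 : ℝ)).mono'
    measurable_lomaxTail.of_uncurry_right.aestronglyMeasurable ?_
  filter_upwards [hν] with y hy
  rw [norm_of_nonneg (lomaxTail_nonneg y s)]
  exact lomaxTail_le_one hy hs

lemma lomaxMixture_pos (hν₀ : ν ≠ 0) {s : ℝ} (hs : 0 < s) : 0 < lomaxMixture ν s := by
  have hsupp : (Function.support fun y => lomaxTail y s) =ᵐ[ν] univ := by
    rw [eventuallyEq_univ]
    filter_upwards [hν] with y hy
    exact (pow_pos (div_pos hy (add_pos hy hs)) 2).ne'
  rw [lomaxMixture, integral_pos_iff_support_of_nonneg (fun y => lomaxTail_nonneg y s)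
    (integrable_lomaxTail hν hs.le), measure_congr hsupp]
  exact Measure.measure_univ_pos.2 hν₀

lemma lomaxMixture_antitoneOn : AntitoneOn (lomaxMixture ν) (Ioi 0) := by
  intro s hs s' hs' hle
  refine integral_mono_ae (integrable_lomaxTail hν (le_of_lt hs'))
    (integrable_lomaxTail hν (le_of_lt hs)) ?_
  filter_upwards [hν] with y hy
  exact lomaxTail_antitoneOn hy hs hs' hle

lemma sq_mul_lomaxMixture_monotoneOn :
    MonotoneOn (fun s => s ^ 2 * lomaxMixture ν s) (Ioi 0) := by
  intro s hs s' hs' hle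
  simp only [lomaxMixture, ← integral_const_mul]
  refine integral_mono_ae ((integrable_lomaxTail hν (le_of_lt hs)).const_mul _)
    ((integrable_lomaxTail hν (le_of_lt hs')).const_mul _) ?_
  filter_upwards [hν] with y hy
  exact sq_mul_lomaxTail_monotoneOn hy hs hs' hle

lemma differentiableAt_lomaxMixture {s : ℝ} (hs : 0 < s) :
    DifferentiableAt ℝ (lomaxMixture ν) s := by
  refine (hasDerivAt_integral_of_dominated_loc_of_deriv_le (F := fun x y => lomaxTail y x)
    (F' := fun x y => -2 * lomaxTail y x / (y + x)) (bound := fun _ => 2 / (s / 2))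
    (Ioi_mem_nhds (half_lt_self hs))
    (.of_forall fun x => measurable_lomaxTail.of_uncurry_right.aestronglyMeasurable)
    (integrable_lomaxTail hν hs.le) ?_ ?_ (integrable_const _) ?_).2.differentiableAt
  · have := measurable_lomaxTail.of_uncurry_right (y := s)
    exact Measurable.aestronglyMeasurable (by fun_prop)
  · filter_upwards [hν] with y hy x (hx : s / 2 < x)
    have hx₀ : 0 < x := (half_pos hs).trans hx
    rw [norm_div, norm_mul, norm_of_nonneg (lomaxTail_nonneg y x), norm_neg, norm_ofNat,
      norm_of_nonneg (by positivity : 0 ≤ y + x)]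
    have := lomaxTail_le_one hy hx₀.le
    gcongr
    · linarith
    · linarith
  · filter_upwards [hν] with y hy x (hx : s / 2 < x)
    exact hasDerivAt_lomaxTail (by linarith)

lemma integrableOn_lomaxMixture (hint : Integrable (fun y => y) ν) :
    IntegrableOn (lomaxMixture ν) (Ioi 0) := by
  have hprod : Integrable (Function.uncurry lomaxTail ∘ Prod.swap)
      ((volume.restrict (Ioi 0)).prod ν) := by
    refine (integrable_prod_iff'
      (measurable_lomaxTail.comp measurable_swap).aestronglyMeasurable).2
      ⟨hν.mono fun _ => integrableOn_lomaxTail, hint.congr ?_⟩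
    filter_upwards [hν] with y hy
    simp only [Function.comp_apply, Prod.swap_prod_mk, Function.uncurry_apply_pair,
      norm_of_nonneg (lomaxTail_nonneg _ _), integral_lomaxTail hy]
  exact hprod.integral_prod_left

lemma measureReal_Ioi_le_lomaxMixture {s : ℝ} (hs : 0 < s) :
    ν.real (Ioi s) ≤ 4 * lomaxMixture ν s := by
  have hsub : Ioi s ⊆ {y | 1 / 4 ≤ lomaxTail y s} := by
    intro y (hy : s < y)
    have hhalf : 1 / 2 ≤ y / (y + s) := by
      rw [div_le_div_iff₀ two_pos (by linarith)]
      linarith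
    calc (1 / 4 : ℝ) = (1 / 2) ^ 2 := by norm_num
      _ ≤ (y / (y + s)) ^ 2 := by gcongr
  have hmarkov := mul_meas_ge_le_integral_of_nonneg
    (.of_forall fun y => lomaxTail_nonneg y s) (integrable_lomaxTail hν hs.le) (1 / 4)
  have hmeas : ν.real (Ioi s) ≤ ν.real {y | 1 / 4 ≤ lomaxTail y s} := measureReal_mono hsub
  rw [lomaxMixture]
  linarith

end LomaxMixture

section TailWeights

lemma tendsto_measure_Ioi_atTop {α : Type*} [MeasurableSpace α] [TopologicalSpace α]
    [LinearOrder α] [OrderClosedTopology α] [OpensMeasurableSpace α]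
    [(atTop : Filter α).IsCountablyGenerated] (m : Measure α) [IsFiniteMeasure m] :
    Tendsto (fun x => m (Ioi x)) atTop (𝓝 0) := by
  have hcompl : ∀ x, m (Ioi x) = m univ - m (Iic x) := fun x => by
    rw [← compl_Iic, measure_compl measurableSet_Iic (measure_ne_top m _)]
  simpa only [hcompl, tsub_self] using ENNReal.Tendsto.sub tendsto_const_nhds
    (tendsto_measure_Iic_atTop m) (.inl (measure_ne_top m univ))

-- The weight counts the thresholds `a n` below `x`, where the mass beyond `a n` is at most `2⁻ⁿ`.
lemma exists_measurable_tendsto_top_lintegral_ne_top {α : Type*} [MeasurableSpace α]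
    [TopologicalSpace α] [LinearOrder α] [OrderClosedTopology α] [OpensMeasurableSpace α]
    [Nonempty α] [NoMaxOrder α] [(atTop : Filter α).IsCountablyGenerated]
    (m : Measure α) [IsFiniteMeasure m] :
    ∃ w : α → ℝ≥0∞, Measurable w ∧ Tendsto w atTop (𝓝 ⊤) ∧ ∫⁻ x, w x ∂m ≠ ⊤ := by
  have hthreshold : ∀ n : ℕ, ∃ a : α, m (Ioi a) ≤ 2⁻¹ ^ n := fun n =>
    ((tendsto_measure_Ioi_atTop m).eventually_le_const (ENNReal.pow_pos (by simp) n)).exists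
  choose a ha using hthreshold
  have hmeas : ∀ n, Measurable ((Ioi (a n)).indicator (1 : α → ℝ≥0∞)) := fun n =>
    measurable_one.indicator measurableSet_Ioi
  refine ⟨fun x => ∑' n, (Ioi (a n)).indicator 1 x, .tsum hmeas, ?_, ?_⟩
  · refine ENNReal.tendsto_nhds_top_iff_nat.2 fun N => ?_
    have hbeyond : ∀ᶠ x in atTop, ∀ n ∈ Finset.range (N + 1), a n < x :=
      (eventually_all_finset _).2 fun n _ => eventually_gt_atTop (a n)
    filter_upwards [hbeyond] with x hx
    calc (N : ℝ≥0∞) < (N + 1 : ℕ) := by exact_mod_cast N.lt_succ_self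
      _ = ∑ n ∈ Finset.range (N + 1), (Ioi (a n)).indicator 1 x := by
        rw [Finset.sum_congr rfl fun n hn => indicator_of_mem (mem_Ioi.2 (hx n hn)) _]
        simp
      _ ≤ ∑' n, (Ioi (a n)).indicator 1 x := ENNReal.sum_le_tsum _
  · rw [lintegral_tsum fun n => (hmeas n).aemeasurable]
    simp only [lintegral_indicator_one measurableSet_Ioi]
    refine ((ENNReal.tsum_le_tsum ha).trans_lt ?_).ne
    simp [ENNReal.tsum_geometric]

lemma measureReal_Ioi_isLittleO_of_setLIntegral_le {α : Type*} [MeasurableSpace α]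
    [Preorder α] {ρ ν : Measure α} [IsFiniteMeasure ν] {w : α → ℝ≥0∞}
    (hw : Measurable w) (hw_top : Tendsto w atTop (𝓝 ⊤))
    (hle : ∀ᶠ s in atTop, ∫⁻ y in Ioi s, w y ∂ρ ≤ ν (Ioi s)) :
    (fun s => ρ.real (Ioi s)) =o[atTop] fun s => ν.real (Ioi s) := by
  refine isLittleO_iff_nat_mul_le.2 fun n => ?_
  have hn : ∀ᶠ y in atTop, (n : ℝ≥0∞) ≤ w y :=
    hw_top.eventually (le_mem_nhds (ENNReal.natCast_lt_top n))
  filter_upwards [eventually_forall_ge_atTop.2 hn, hle] with s hs hle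
  have htail : n * ρ (Ioi s) ≤ ν (Ioi s) :=
    calc n * ρ (Ioi s) = ∫⁻ _ in Ioi s, n ∂ρ := (setLIntegral_const _ _).symm
      _ ≤ ∫⁻ y in Ioi s, w y ∂ρ := setLIntegral_mono hw fun y hy => hs y (le_of_lt hy)
      _ ≤ ν (Ioi s) := hle
  simpa [measureReal_def] using ENNReal.toReal_mono (measure_ne_top ν _) htail

lemma IsScaleMeasure.of_ae_one_le {ν : Measure ℝ} (hν : ∀ᵐ y ∂ν, 1 ≤ y) (hν₀ : ν ≠ 0)
    (hmean : ∫⁻ y, ENNReal.ofReal y ∂ν < ⊤) : IsScaleMeasure ν where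
  isFiniteMeasure := by
    refine ⟨lt_of_le_of_lt ?_ hmean⟩
    rw [← lintegral_one]
    exact lintegral_mono_ae (hν.mono fun y => ENNReal.one_le_ofReal.2)
  ae_pos := hν.mono fun y => one_pos.trans_le
  ne_zero := hν₀
  integrable_id := by
    refine ⟨aestronglyMeasurable_id, (lintegral_mono_ae ?_).trans_lt hmean⟩
    filter_upwards [hν] with y hy
    rw [enorm_eq_ofReal (zero_le_one.trans hy)]

lemma isScaleMeasure_dirac_one : IsScaleMeasure (Measure.dirac 1) :=
  .of_ae_one_le ((ae_dirac_iff measurableSet_Ici).2 le_rfl) (IsProbabilityMeasure.ne_zero _)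
    (by simp [lintegral_dirac' _ ENNReal.measurable_ofReal])

lemma exists_isScaleMeasure_measureReal_Ioi_isLittleO {ρ : Measure ℝ}
    (hρ : ∫⁻ y, ENNReal.ofReal y ∂ρ ≠ ⊤) :
    ∃ ν : Measure ℝ, IsScaleMeasure ν ∧
      (fun s => ρ.real (Ioi s)) =o[atTop] fun s => ν.real (Ioi s) := by
  have : IsFiniteMeasure (ρ.withDensity ENNReal.ofReal) := isFiniteMeasure_withDensity hρ
  obtain ⟨w, hw, hw_top, hw_int⟩ :=
    exists_measurable_tendsto_top_lintegral_ne_top (ρ.withDensity ENNReal.ofReal)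
  -- The atom at `1` keeps `ν` nonzero when `ρ` does not charge `(1, ∞)`.
  let ν := (ρ.restrict (Ioi 1)).withDensity w + Measure.dirac 1
  have hν_ge : ∀ᵐ y ∂ν, 1 ≤ y := by
    refine ae_add_measure_iff.2 ⟨?_, (ae_dirac_iff measurableSet_Ici).2 le_rfl⟩
    refine (withDensity_absolutelyContinuous _ w).ae_le ?_
    exact (ae_restrict_mem measurableSet_Ioi).mono fun y hy => le_of_lt hy
  have hν_mean : ∫⁻ y, ENNReal.ofReal y ∂ν < ⊤ := by
    rw [lintegral_add_measure, lintegral_dirac' _ ENNReal.measurable_ofReal,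
      lintegral_withDensity_eq_lintegral_mul _ hw ENNReal.measurable_ofReal]
    refine ENNReal.add_lt_top.2 ⟨(setLIntegral_le_lintegral _ _).trans_lt ?_, by simp⟩
    rw [lintegral_withDensity_eq_lintegral_mul _ ENNReal.measurable_ofReal hw, mul_comm] at hw_int
    exact hw_int.lt_top
  have hν_tail : ∀ s, 1 ≤ s → ∫⁻ y in Ioi s, w y ∂ρ ≤ ν (Ioi s) := fun s hs =>
    calc ∫⁻ y in Ioi s, w y ∂ρ = (ρ.restrict (Ioi 1)).withDensity w (Ioi s) := by
          rw [withDensity_apply _ measurableSet_Ioi, Measure.restrict_restrict measurableSet_Ioi,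
            inter_eq_left.2 (Ioi_subset_Ioi hs)]
      _ ≤ ν (Ioi s) := Measure.le_add_right le_rfl _
  have hν : IsScaleMeasure ν :=
    .of_ae_one_le hν_ge (fun h => by simpa [ν] using congrArg (· univ) h) hν_mean
  have := hν.isFiniteMeasure
  exact ⟨ν, hν, measureReal_Ioi_isLittleO_of_setLIntegral_le hw hw_top
    ((eventually_ge_atTop 1).mono hν_tail)⟩

end TailWeights

section Moments

variable {Ω : Type*} [MeasurableSpace Ω] {μ : Measure Ω}

lemma measureReal_map_withDensity_Ioi {f Y : Ω → ℝ} (hf : AEMeasurable f μ) (hf₀ : 0 ≤ᵐ[μ] f)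
    (hY : AEMeasurable Y μ) (s : ℝ) :
    ((μ.withDensity fun ω => ENNReal.ofReal (f ω)).map Y).real (Ioi s) =
      ∫ ω in {ω | s < Y ω}, f ω ∂μ := by
  rw [measureReal_def, Measure.map_apply_of_aemeasurable
      (hY.mono_ac (withDensity_absolutelyContinuous _ _)) measurableSet_Ioi,
    withDensity_apply₀ _ (hY.nullMeasurable measurableSet_Ioi),
    integral_eq_lintegral_of_nonneg_ae (ae_restrict_of_ae hf₀) hf.aestronglyMeasurable.restrict]
  rfl

lemma exists_isScaleMeasure_setIntegral_isLittleO {f Y : Ω → ℝ} (hf : AEMeasurable f μ)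
    (hf₀ : 0 ≤ᵐ[μ] f) (hY : AEMeasurable Y μ) (hint : Integrable (fun ω => f ω * Y ω) μ) :
    ∃ ν : Measure ℝ, IsScaleMeasure ν ∧
      (fun s => ∫ ω in {ω | s < Y ω}, f ω ∂μ) =o[atTop] lomaxMixture ν := by
  set ρ := (μ.withDensity fun ω => ENNReal.ofReal (f ω)).map Y
  have hρ : ∫⁻ y, ENNReal.ofReal y ∂ρ ≠ ⊤ := by
    rw [lintegral_map' ENNReal.measurable_ofReal.aemeasurable
        (hY.mono_ac (withDensity_absolutelyContinuous _ _)),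
      lintegral_withDensity_eq_lintegral_mul₀ hf.ennreal_ofReal hY.ennreal_ofReal]
    refine ((lintegral_mono_ae ?_).trans_lt hint.2).ne
    filter_upwards [hf₀] with ω hω
    rw [Pi.mul_apply, ← ENNReal.ofReal_mul hω]
    exact ofReal_le_enorm _
  obtain ⟨ν, hν, htail⟩ := exists_isScaleMeasure_measureReal_Ioi_isLittleO hρ
  have := hν.isFiniteMeasure
  refine ⟨ν, hν, ?_⟩
  simp only [ρ, measureReal_map_withDensity_Ioi hf hf₀ hY] at htail
  refine htail.trans_isBigO (IsBigO.of_bound 4 ?_)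
  filter_upwards [eventually_gt_atTop 0] with s hs
  rw [norm_of_nonneg measureReal_nonneg,
    norm_of_nonneg (lomaxMixture_pos hν.ae_pos hν.ne_zero hs).le]
  exact measureReal_Ioi_le_lomaxMixture hν.ae_pos hs

end Moments

lemma isBigO_one_setIntegral {Ω : Type*} [MeasurableSpace Ω] {μ : Measure Ω} {f : Ω → ℝ}
    (hf₀ : 0 ≤ᵐ[μ] f) (hf : Integrable f μ) {ι : Type*} (s : ι → Set Ω) (F : Filter ι) :
    (fun i => ∫ ω in s i, f ω ∂μ) =O[F] fun _ => (1 : ℝ) := by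
  refine IsBigO.of_bound (∫ ω, f ω ∂μ) (.of_forall fun i => ?_)
  rw [norm_one, mul_one, norm_of_nonneg (integral_nonneg_of_ae (ae_restrict_of_ae hf₀))]
  exact setIntegral_le_integral hf hf₀

section TruncatedMoments

variable {Ω E : Type*} [MeasurableSpace Ω] {μ : Measure Ω} [SeminormedAddCommGroup E] {X : Ω → E}

lemma exists_isScaleMeasure_setIntegral_norm_sq_isLittleO (hX : AEStronglyMeasurable X μ)
    (hmom : Integrable (fun ω => ‖X ω‖ ^ 2 * log (1 + ‖X ω‖)) μ) :
    ∃ ν : Measure ℝ, IsScaleMeasure ν ∧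
      (fun t => ∫ ω in {ω | t < ‖X ω‖}, ‖X ω‖ ^ 2 ∂μ)
        =o[atTop] fun t => lomaxMixture ν (log (1 + t)) := by
  have hnorm : AEMeasurable (fun ω => ‖X ω‖) μ := hX.norm.aemeasurable
  obtain ⟨ν, hν, htail⟩ := exists_isScaleMeasure_setIntegral_isLittleO
    (hnorm.pow_const 2) (.of_forall fun ω => sq_nonneg _) (hnorm.const_add 1).log hmom
  refine ⟨ν, hν, (htail.comp_tendsto tendsto_log_one_add_atTop).congr' ?_ .rfl⟩
  filter_upwards [eventually_gt_atTop 0] with t ht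
  have hlevel : ∀ ω, log (1 + t) < log (1 + ‖X ω‖) ↔ t < ‖X ω‖ := fun ω => by
    rw [log_lt_log_iff (by positivity) (by positivity), add_lt_add_iff_left]
  simp only [Function.comp_apply, hlevel]

lemma setIntegral_norm_rpow_isLittleO_lomaxMixture {ν : Measure ℝ} [IsFiniteMeasure ν]
    (hν : ∀ᵐ y ∂ν, 0 < y) (hν₀ : ν ≠ 0) {r p : ℝ} (hp : 0 < p)
    (hmom : Integrable (fun ω => ‖X ω‖ ^ r) μ) :
    (fun t => ∫ ω in {ω | t < ‖X ω‖}, ‖X ω‖ ^ r ∂μ)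
      =o[atTop] fun t => lomaxMixture ν (log (1 + t)) * t ^ p := by
  have hbdd := isBigO_one_setIntegral (.of_forall fun _ => rpow_nonneg (norm_nonneg _) r) hmom
    (fun t => {ω | t < ‖X ω‖}) atTop
  exact hbdd.trans_isLittleO (one_isLittleO_comp_log_one_add_mul_rpow
    (lomaxMixture_pos hν hν₀ one_pos) (sq_mul_lomaxMixture_monotoneOn hν) hp)

lemma exists_isScaleMeasure_setIntegral_norm_rpow_isLittleO {r : ℝ} (hr : 2 ≤ r)
    (hX : AEStronglyMeasurable X μ)
    (hmom2 : r = 2 → Integrable (fun ω => ‖X ω‖ ^ 2 * log (1 + ‖X ω‖)) μ)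
    (hmomr : 2 < r → Integrable (fun ω => ‖X ω‖ ^ r) μ) :
    ∃ ν : Measure ℝ, IsScaleMeasure ν ∧
      (fun t => ∫ ω in {ω | t < ‖X ω‖}, ‖X ω‖ ^ r ∂μ)
        =o[atTop] fun t => lomaxMixture ν (log (1 + t)) * t ^ (r - 2) := by
  rcases hr.eq_or_lt with rfl | hr
  · simpa only [rpow_two, sub_self, rpow_zero, mul_one] using
      exists_isScaleMeasure_setIntegral_norm_sq_isLittleO hX (hmom2 rfl)
  · have hδ := isScaleMeasure_dirac_one
    exact ⟨Measure.dirac 1, hδ, setIntegral_norm_rpow_isLittleO_lomaxMixture hδ.ae_pos hδ.ne_zero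
      (sub_pos.2 hr) (hmomr hr)⟩

theorem stmt5_general {r : ℝ} (hr : 2 ≤ r) (hX : AEStronglyMeasurable X μ)
    (hmom2 : r = 2 → Integrable (fun ω => ‖X ω‖ ^ 2 * log (1 + ‖X ω‖)) μ)
    (hmomr : 2 < r → Integrable (fun ω => ‖X ω‖ ^ r) μ) :
    ∃ γ : ℝ → ℝ,
      (∀ t, 0 < t → 0 < γ t) ∧
      SlowlyVarying γ ∧
      AntitoneOn γ (Ioi 0) ∧
      (∀ t, 0 < t → DifferentiableAt ℝ γ t) ∧
      (fun t => ∫ ω in {ω | t < ‖X ω‖}, ‖X ω‖ ^ r ∂μ) =o[atTop] (fun t => γ t * t ^ (r - 2)) ∧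
      IntegrableOn (fun x => γ x / x) (Ioi 1) := by
  obtain ⟨ν, ⟨hfin, hpos, hne, hmean⟩, htail⟩ :=
    exists_isScaleMeasure_setIntegral_norm_rpow_isLittleO hr hX hmom2 hmomr
  have hlog_pos : ∀ t : ℝ, 0 < t → 0 < log (1 + t) := fun t ht => log_pos (by linarith)
  have hmix_pos := fun s => lomaxMixture_pos (s := s) hpos hne
  have hmix_anti := lomaxMixture_antitoneOn hpos
  refine ⟨fun t => lomaxMixture ν (log (1 + t)), fun t ht => hmix_pos _ (hlog_pos t ht),
    slowlyVarying_comp_log_one_add hmix_pos hmix_anti (sq_mul_lomaxMixture_monotoneOn hpos),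
    ?_, fun t ht => ?_, htail,
    integrableOn_comp_log_one_add_div (integrableOn_lomaxMixture hpos hmean)⟩
  · intro t (ht : 0 < t) t' (ht' : 0 < t') hle
    exact hmix_anti (hlog_pos t ht) (hlog_pos t' ht') (by gcongr)
  · have hlog : DifferentiableAt ℝ (fun t => log (1 + t)) t :=
      DifferentiableAt.log (by fun_prop) (by positivity)
    exact DifferentiableAt.comp (g := lomaxMixture ν) t
      (differentiableAt_lomaxMixture hpos (hlog_pos t ht)) hlog

end TruncatedMoments

end Development

/-- **Lemma 2.2 (construction of `γ`).** There exists a slowly varying, positive, monotone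
decreasing, differentiable function `γ` on `(0,∞)` such that
`E[|X|^r; |X| > t] = o(γ(t) t^{r-2})` as `t → ∞` and `∫_1^∞ γ(x)/x dx < ∞`. -/
theorem stmt5
    (r : ℕ) (hr : 2 ≤ r)
    {Ω : Type} [MeasurableSpace Ω] (μ : Measure Ω) [IsProbabilityMeasure μ]
    (X : Ω → ℝ) (hXm : Measurable X)
    (hmom2 : r = 2 → Integrable (fun ω => (X ω) ^ 2 * Real.log (1 + |X ω|)) μ)
    (hmomr : 2 < r → Integrable (fun ω => |X ω| ^ r) μ) :
    ∃ γ : ℝ → ℝ,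
      (∀ t, 0 < t → 0 < γ t) ∧
      -- slowly varying
      (∀ l : ℝ, 0 < l → Tendsto (fun t => γ (l * t) / γ t) atTop (nhds 1)) ∧
      -- monotone decreasing on (0,∞)
      AntitoneOn γ (Set.Ioi 0) ∧
      -- differentiable on (0,∞)
      (∀ t : ℝ, 0 < t → DifferentiableAt ℝ γ t) ∧
      -- E[|X|^r ; |X| > t] = o(γ(t) t^{r-2})
      (fun t : ℝ => ∫ ω in {ω | t < |X ω|}, |X ω| ^ r ∂μ)
        =o[atTop] (fun t : ℝ => γ t * t ^ (r - 2)) ∧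
      -- ∫_1^∞ γ(x)/x dx < ∞
      IntegrableOn (fun x => γ x / x) (Set.Ioi 1) := by
  have hexp : (r : ℝ) - 2 = (r - 2 : ℕ) := by rw [Nat.cast_sub hr, Nat.cast_ofNat]
  simpa [hexp, SlowlyVarying] using stmt5_general (r := r) (mod_cast hr) hXm.aestronglyMeasurable
    (fun h => by simpa using hmom2 (mod_cast h)) (fun h => by simpa using hmomr (mod_cast h))
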